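/- arXiv:2308.13991 — 2 statements merged into one kernel-verified Lean document; each statement's English description precedes it below -/
import Mathlib

section
/- Let 0 < ε < 1, let N ≥ 2 be a natural number, and let p be a natural number with p ≥ 12·ln N / (ε²·(1.5 − ε)). Then for every natural number d and every family of N points y₁, …, y_N in ℝ^d there exists a map f : ℝ^d → ℝ^p such that for all indices i, j one has (1 − ε)·‖y_i − y_j‖² ≤ ‖f(y_i) − f(y_j)‖² ≤ (1 + ε)·‖y_i − y_j‖². -/
open MeasureTheory ProbabilityTheory in
lemma jl_one_dim (δ : ℝ) (hδ : -1 < δ) :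
    ∫ x, Real.exp (δ / (2 * (1 + δ)) * (x ^ 2 - (1 + δ))) ∂(gaussianReal 0 1) =
      Real.exp ((Real.log (1 + δ) - δ) / 2) := by
  have h1 : 0 < 1 + δ := by linarith
  rw [integral_gaussianReal_eq_integral_smul one_ne_zero]
  have h2 : ∀ x : ℝ, gaussianPDFReal 0 1 x • Real.exp (δ / (2 * (1 + δ)) * (x ^ 2 - (1 + δ))) =
      ((√(2 * Real.pi))⁻¹ * Real.exp (-δ / 2)) * Real.exp (-(1 / (2 * (1 + δ))) * x ^ 2) := by
    intro x
    simp only [gaussianPDFReal, smul_eq_mul, NNReal.coe_one, mul_one, sub_zero]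
    rw [mul_assoc, mul_assoc, ← Real.exp_add, ← Real.exp_add]
    congr 2
    field_simp
    ring
  simp_rw [h2]
  rw [integral_const_mul, integral_gaussian]
  have h3 : Real.pi / (1 / (2 * (1 + δ))) = (2 * Real.pi) * (1 + δ) := by field_simp
  rw [h3, Real.sqrt_mul (x := 2 * Real.pi) (by positivity)]
  have h4 : √(1 + δ) = Real.exp (Real.log (1 + δ) / 2) := by
    rw [Real.exp_half, Real.exp_log h1]
  have h5 : √(2 * Real.pi) ≠ 0 := by positivity
  rw [h4, sub_div, sub_eq_add_neg, Real.exp_add, ← neg_div]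
  field_simp

lemma jl_log_bound (x : ℝ) (hx : -1 < x) : Real.log (1 + x) ≤ x - x ^ 2 / 2 + x ^ 3 / 3 := by
  set g : ℝ → ℝ := fun t => t - t ^ 2 / 2 + t ^ 3 / 3 - Real.log (1 + t) with hg
  have hd : ∀ t : ℝ, -1 < t → HasDerivAt g (t ^ 3 / (1 + t)) t := by
    intro t ht
    have h1 : 1 + t ≠ 0 := by linarith
    have := (((hasDerivAt_id t).sub ((hasDerivAt_pow 2 t).div_const 2)).add
      ((hasDerivAt_pow 3 t).div_const 3)).sub (((hasDerivAt_id t).const_add 1).log h1)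
    refine HasDerivAt.congr_deriv (f := g) this ?_
    simp only [id]
    field_simp
    push_cast
    ring
  have h0 : g 0 = 0 := by simp [hg]
  suffices g 0 ≤ g x by
    rw [h0] at this
    simp only [hg] at this
    linarith
  rcases le_total 0 x with h | h
  · refine monotoneOn_of_deriv_nonneg (convex_Icc 0 x) ?_ ?_ ?_ ⟨le_rfl, h⟩ ⟨h, le_rfl⟩ h
    · intro t ht
      exact (hd t (by linarith [ht.1])).continuousAt.continuousWithinAt
    · intro t ht
      rw [interior_Icc] at ht
      exact (hd t (by linarith [ht.1])).differentiableAt.differentiableWithinAt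
    · intro t ht
      rw [interior_Icc] at ht
      rw [(hd t (by linarith [ht.1])).deriv]
      have := ht.1
      positivity
  · refine antitoneOn_of_deriv_nonpos (convex_Icc x 0) ?_ ?_ ?_ ⟨le_rfl, h⟩ ⟨h, le_rfl⟩ h
    · intro t ht
      exact (hd t (by linarith [ht.1])).continuousAt.continuousWithinAt
    · intro t ht
      rw [interior_Icc] at ht
      exact (hd t (by linarith [ht.1])).differentiableAt.differentiableWithinAt
    · intro t ht
      rw [interior_Icc] at ht
      rw [(hd t (by linarith [ht.1])).deriv]
      have h2 := ht.2
      refine div_nonpos_of_nonpos_of_nonneg ?_ (by linarith [ht.1])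
      have : 0 ≤ (-t) ^ 3 := pow_nonneg (by linarith) 3
      nlinarith

open MeasureTheory ProbabilityTheory in
lemma jl_vec (d : ℕ) (u : EuclideanSpace ℝ (Fin d)) (hu : ‖u‖ = 1) (δ : ℝ) (hδ : -1 < δ) :
    ∫ g, Real.exp (δ / (2 * (1 + δ)) * ((inner ℝ u g) ^ 2 - (1 + δ)))
      ∂(stdGaussian (EuclideanSpace ℝ (Fin d))) =
      Real.exp ((Real.log (1 + δ) - δ) / 2) := by
  have hm : (stdGaussian (EuclideanSpace ℝ (Fin d))).map (innerSL ℝ u) = gaussianReal 0 1 := by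
    rw [IsGaussian.map_eq_gaussianReal, integral_strongDual_stdGaussian, variance_dual_stdGaussian,
      innerSL_apply_norm, hu]
    simp
  rw [← jl_one_dim δ hδ, ← hm, integral_map (by fun_prop)
    (Measurable.aestronglyMeasurable (by fun_prop))]
  simp

open MeasureTheory ProbabilityTheory in
lemma jl_mat (d p : ℕ) (u : EuclideanSpace ℝ (Fin d)) (hu : ‖u‖ = 1) (δ : ℝ) (hδ : -1 < δ) :
    ∫ G : Fin p → EuclideanSpace ℝ (Fin d),
      Real.exp (δ / (2 * (1 + δ)) * (∑ k, (inner ℝ u (G k)) ^ 2 - p * (1 + δ)))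
      ∂(Measure.pi fun _ => stdGaussian (EuclideanSpace ℝ (Fin d))) =
      Real.exp (p * ((Real.log (1 + δ) - δ) / 2)) := by
  have h : ∀ G : Fin p → EuclideanSpace ℝ (Fin d),
      Real.exp (δ / (2 * (1 + δ)) * (∑ k, (inner ℝ u (G k)) ^ 2 - p * (1 + δ))) =
      ∏ k, Real.exp (δ / (2 * (1 + δ)) * ((inner ℝ u (G k)) ^ 2 - (1 + δ))) := by
    intro G
    rw [← Real.exp_sum, ← Finset.mul_sum, Finset.sum_sub_distrib, Finset.sum_const, Finset.card_univ,
      Fintype.card_fin, nsmul_eq_mul]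
  simp_rw [h]
  rw [integral_fintype_prod_eq_prod (f := fun _ (g : EuclideanSpace ℝ (Fin d)) =>
    Real.exp (δ / (2 * (1 + δ)) * ((inner ℝ u g) ^ 2 - (1 + δ))))]
  simp only [jl_vec d u hu δ hδ]
  rw [Finset.prod_const, ← Real.exp_nat_mul]
  simp

lemma jl_tail (ε : ℝ) (hε0 : 0 < ε) (hε1 : ε < 1) (N : ℕ) (hN : 2 ≤ N)
    (p : ℕ) (hp : (p : ℝ) ≥ 12 * Real.log N / (ε ^ 2 * (1.5 - ε))) (δ : ℝ)
    (hδ : δ = ε ∨ δ = -ε) :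
    Real.exp (p * ((Real.log (1 + δ) - δ) / 2)) ≤ ((N : ℝ) ^ 2)⁻¹ := by
  have hNp : (0 : ℝ) < N := by positivity
  have h1 : Real.log (1 + δ) - δ ≤ - (ε ^ 2 * (1.5 - ε) / 3) := by
    have h3 : 0 < ε ^ 3 := by positivity
    have := jl_log_bound δ (by rcases hδ with h | h <;> linarith)
    rcases hδ with rfl | rfl <;> nlinarith
  have h2 : 12 * Real.log N ≤ p * (ε ^ 2 * (1.5 - ε)) := by
    rwa [ge_iff_le, div_le_iff₀ (mul_pos (by positivity) (by linarith))] at hp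
  have h3 : ((N : ℝ) ^ 2)⁻¹ = Real.exp (-(2 * Real.log N)) := by
    rw [Real.exp_neg, mul_comm, Real.exp_mul, Real.exp_log hNp]
    simp
  rw [h3, Real.exp_le_exp]
  have h4 : (p : ℝ) * (Real.log (1 + δ) - δ) ≤ p * (- (ε ^ 2 * (1.5 - ε) / 3)) :=
    mul_le_mul_of_nonneg_left h1 (by positivity)
  linarith

open MeasureTheory ProbabilityTheory in
lemma jl_exists (ε : ℝ) (hε0 : 0 < ε) (hε1 : ε < 1) (N : ℕ) (hN : 2 ≤ N)
    (p : ℕ) (hp : (p : ℝ) ≥ 12 * Real.log N / (ε ^ 2 * (1.5 - ε)))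
    (d : ℕ) (u : Fin N × Fin N → EuclideanSpace ℝ (Fin d)) (δ : Fin N × Fin N → ℝ)
    (hδ : ∀ q, δ q = ε ∨ δ q = -ε) (S : Finset (Fin N × Fin N))
    (hS : S ⊆ Finset.univ.offDiag) (hu : ∀ q ∈ S, ‖u q‖ = 1) :
    ∃ G : Fin p → EuclideanSpace ℝ (Fin d), ∀ q ∈ S,
      δ q * (∑ k, (inner ℝ (u q) (G k)) ^ 2 - p * (1 + δ q)) < 0 := by
  have hδ1 : ∀ q, -1 < δ q := fun q => by rcases hδ q with h | h <;> linarith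
  set F : Fin N × Fin N → (Fin p → EuclideanSpace ℝ (Fin d)) → ℝ := fun q G =>
    Real.exp (δ q / (2 * (1 + δ q)) * (∑ k, (inner ℝ (u q) (G k)) ^ 2 - p * (1 + δ q))) with hF
  set μ : Measure (Fin p → EuclideanSpace ℝ (Fin d)) :=
    Measure.pi fun _ => stdGaussian (EuclideanSpace ℝ (Fin d)) with hμ
  have hval : ∀ q ∈ S, ∫ G, F q G ∂μ = Real.exp (p * ((Real.log (1 + δ q) - δ q) / 2)) :=
    fun q hq => jl_mat d p (u q) (hu q hq) (δ q) (hδ1 q)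
  have hint : ∀ q ∈ S, Integrable (F q) μ := fun q hq =>
    Integrable.of_integral_ne_zero (by rw [hval q hq]; exact (Real.exp_pos _).ne')
  obtain ⟨G, hG⟩ := exists_le_integral (integrable_finsetSum S hint)
  have hlt : ∫ G, ∑ q ∈ S, F q G ∂μ < 1 := by
    rw [integral_finsetSum S hint]
    have hNp : (0 : ℝ) < N := by positivity
    calc ∑ q ∈ S, ∫ G, F q G ∂μ ≤ ∑ q ∈ S, ((N : ℝ) ^ 2)⁻¹ := Finset.sum_le_sum fun q hq => by
            rw [hval q hq]; exact jl_tail ε hε0 hε1 N hN p hp _ (hδ q)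
      _ = S.card * ((N : ℝ) ^ 2)⁻¹ := by simp
      _ < 1 := by
        rw [← div_eq_mul_inv, div_lt_one (by positivity)]
        have hc := Finset.card_le_card hS
        rw [Finset.offDiag_card] at hc
        simp only [Finset.card_univ, Fintype.card_fin] at hc
        have : S.card < N ^ 2 := by
          have : 0 < N * N := by positivity
          rw [pow_two]; omega
        exact_mod_cast this
  refine ⟨G, fun q hq => ?_⟩
  have h1 : F q G < 1 := by
    refine lt_of_le_of_lt ?_ (hG.trans_lt hlt)
    exact Finset.single_le_sum (f := fun q => F q G) (fun i _ => (Real.exp_pos _).le) hq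
  rw [hF, Real.exp_lt_one_iff] at h1
  have h2 : 0 < 1 + δ q := by linarith [hδ1 q]
  by_contra! hcon
  have : δ q / (2 * (1 + δ q)) * (∑ k, (inner ℝ (u q) (G k)) ^ 2 - p * (1 + δ q)) =
    δ q * (∑ k, (inner ℝ (u q) (G k)) ^ 2 - p * (1 + δ q)) / (2 * (1 + δ q)) := by ring
  rw [this] at h1
  have : 0 ≤ δ q * (∑ k, (inner ℝ (u q) (G k)) ^ 2 - p * (1 + δ q)) / (2 * (1 + δ q)) := by
    positivity
  linarith


/-- **Johnson–Lindenstrauss lemma.** If `0 < ε < 1`, `N ≥ 2` and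
`p ≥ 12 ln N / (ε² (1.5 − ε))`, then any `N` points in `ℝ^d` admit a map
into `ℝ^p` distorting squared pairwise distances by at most `1 ± ε`. -/
theorem stmt0 (ε : ℝ) (hε0 : 0 < ε) (hε1 : ε < 1) (N : ℕ) (hN : 2 ≤ N)
    (p : ℕ) (hp : (p : ℝ) ≥ 12 * Real.log N / (ε ^ 2 * (1.5 - ε)))
    (d : ℕ) (y : Fin N → EuclideanSpace ℝ (Fin d)) :
    ∃ f : EuclideanSpace ℝ (Fin d) → EuclideanSpace ℝ (Fin p),
      ∀ i j : Fin N,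
        (1 - ε) * ‖y i - y j‖ ^ 2 ≤ ‖f (y i) - f (y j)‖ ^ 2 ∧
        ‖f (y i) - f (y j)‖ ^ 2 ≤ (1 + ε) * ‖y i - y j‖ ^ 2 := by
  have hNp : (1 : ℝ) < N := by exact_mod_cast hN
  have hpp : (0 : ℝ) < p := by
    refine lt_of_lt_of_le ?_ hp
    have := Real.log_pos hNp
    have h2 : 0 < 1.5 - ε := by linarith
    positivity
  set S : Finset (Fin N × Fin N) := Finset.univ.offDiag.filter fun q => y q.1 ≠ y q.2 with hS
  obtain ⟨G, hG⟩ := jl_exists ε hε0 hε1 N hN p hp d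
    (fun q => (‖y q.1 - y q.2‖)⁻¹ • (y q.1 - y q.2)) (fun q => if q.1 < q.2 then ε else -ε)
    (fun q => by split_ifs <;> simp) S (Finset.filter_subset _ _) (by
      intro q hq
      have : y q.1 - y q.2 ≠ 0 := sub_ne_zero.2 (Finset.mem_filter.1 hq).2
      rw [norm_smul, norm_inv, norm_norm, inv_mul_cancel₀ (norm_ne_zero_iff.2 this)])
  set f : EuclideanSpace ℝ (Fin d) → EuclideanSpace ℝ (Fin p) :=
    fun x => WithLp.toLp 2 (fun k => inner ℝ x (G k) / √p) with hf
  have hfn : ∀ a b, ‖f a - f b‖ ^ 2 = (∑ k, (inner ℝ (a - b) (G k)) ^ 2) / p := by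
    intro a b
    rw [EuclideanSpace.norm_sq_eq, Finset.sum_div]
    refine Finset.sum_congr rfl fun k _ => ?_
    simp only [hf, PiLp.sub_apply, Real.norm_eq_abs, sq_abs]
    rw [← sub_div, ← inner_sub_left, div_pow, Real.sq_sqrt hpp.le]
  have key : ∀ i j, i ≠ j → y i ≠ y j →
      (if i < j then ε else -ε) * (‖f (y i) - f (y j)‖ ^ 2 -
        (1 + (if i < j then ε else -ε)) * ‖y i - y j‖ ^ 2) < 0 := by
    intro i j hij hy
    have h := hG (i, j) (by simp [hS, hij, hy])
    have hn : 0 < ‖y i - y j‖ := norm_pos_iff.2 (sub_ne_zero.2 hy)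
    simp only [inner_smul_left, mul_pow, ← Finset.mul_sum] at h
    rw [hfn]
    generalize (if i < j then ε else -ε) = δ at *
    generalize (∑ k, (inner ℝ (y i - y j) (G k)) ^ 2) = T at *
    simp only [conj_trivial] at h
    have e : δ * (T / p - (1 + δ) * ‖y i - y j‖ ^ 2) =
        (δ * ((‖y i - y j‖⁻¹) ^ 2 * T - p * (1 + δ))) * (‖y i - y j‖ ^ 2 / p) := by
      field_simp
    rw [e]
    exact mul_neg_of_neg_of_pos h (by positivity)
  have main : ∀ i j, i < j → (1 - ε) * ‖y i - y j‖ ^ 2 ≤ ‖f (y i) - f (y j)‖ ^ 2 ∧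
        ‖f (y i) - f (y j)‖ ^ 2 ≤ (1 + ε) * ‖y i - y j‖ ^ 2 := by
    intro i j hij
    by_cases hy : y i = y j
    · simp [hy]
    have h1 := key i j hij.ne hy
    have h2 := key j i hij.ne' (Ne.symm hy)
    rw [if_pos hij] at h1
    rw [if_neg hij.le.not_gt, norm_sub_rev (f (y j)), norm_sub_rev (y j)] at h2
    constructor <;> nlinarith
  refine ⟨f, fun i j => ?_⟩
  rcases lt_trichotomy i j with h | h | h
  · exact main i j h
  · simp [h]
  · rw [norm_sub_rev (f (y i)), norm_sub_rev (y i)]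
    exact main j i h
end

section
/- Let d and p be positive natural numbers, let N ≥ 2 be a natural number, let y₁, …, y_N be points of ℝ^d, let 0 < ε < 1, and suppose p ≥ 24·ln N/(3ε² − 2ε³). Let ν be the product measure on matrices R ∈ (Fin p → Fin d → ℝ) with iid standard Gaussian N(0,1) entries, and for each R define f_R(y) := (1/√p)·(R·y). Then ν { R | ∀ i j, (1 − ε)·‖y_i − y_j‖² ≤ ‖f_R(y_i) − f_R(y_j)‖² ≤ (1 + ε)·‖y_i − y_j‖² } ≥ 1/N. -/
open MeasureTheory ProbabilityTheory Matrix

lemma jl_log_upper (x : ℝ) (hx : 0 ≤ x) : Real.log (1 + x) ≤ x - x ^ 2 / 2 + x ^ 3 / 3 := by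
  have hd : ∀ z : ℝ, 0 ≤ z → HasDerivAt (fun z : ℝ => z - z ^ 2 / 2 + z ^ 3 / 3 - Real.log (1 + z))
      (z ^ 3 / (1 + z)) z := by
    intro z hz
    have h1 : HasDerivAt (fun z : ℝ => Real.log (1 + z)) (1 / (1 + z)) z :=
      ((hasDerivAt_id z).const_add 1).log (by simp; positivity)
    have h2 := (((hasDerivAt_id z).sub ((hasDerivAt_pow 2 z).div_const 2)).add
      ((hasDerivAt_pow 3 z).div_const 3)).sub h1
    convert! h2 using 1
    have : 1 + z ≠ 0 := by positivity
    field_simp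
    push_cast
    ring
  have hm : MonotoneOn (fun z : ℝ => z - z ^ 2 / 2 + z ^ 3 / 3 - Real.log (1 + z)) (Set.Ici 0) := by
    apply monotoneOn_of_deriv_nonneg (convex_Ici 0)
    · exact fun z hz => (hd z hz).continuousAt.continuousWithinAt
    · intro z hz
      rw [interior_Ici] at hz
      exact (hd z (le_of_lt hz)).differentiableAt.differentiableWithinAt
    · intro z hz
      rw [interior_Ici] at hz
      have hz' : 0 < z := hz
      rw [(hd z hz'.le).deriv]
      positivity
  have := hm (Set.mem_Ici.2 le_rfl) (Set.mem_Ici.2 hx) hx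
  simp at this
  linarith

lemma jl_log_lower (x : ℝ) (hx : 0 ≤ x) (hx1 : x < 1) : Real.log (1 - x) ≤ - x - x ^ 2 / 2 := by
  have h := Real.hasSum_pow_div_log_of_abs_lt_one (x := x) (by rw [abs_of_nonneg hx]; exact hx1)
  have := sum_le_hasSum (Finset.range 2) (fun i _ => by positivity) h
  norm_num [Finset.sum_range_succ] at this
  linarith

lemma jl_row_law (d : ℕ) (u : Fin d → ℝ) (hu : ∑ j, u j ^ 2 = 1) :
    (Measure.pi fun _ : Fin d => gaussianReal 0 1).map (fun r => ∑ j, r j * u j)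
      = gaussianReal 0 1 := by
  have hm : Measurable (fun r : Fin d → ℝ => ∑ j, r j * u j) := by fun_prop
  have : IsProbabilityMeasure ((Measure.pi fun _ : Fin d => gaussianReal 0 1).map
      (fun r => ∑ j, r j * u j)) := Measure.isProbabilityMeasure_map hm.aemeasurable
  apply Measure.ext_of_charFun
  ext t
  rw [charFun_apply_real, integral_map hm.aemeasurable (by fun_prop), charFun_gaussianReal]
  have : ∀ r : Fin d → ℝ, Complex.exp (t * ((∑ j, r j * u j : ℝ) : ℂ) * Complex.I)
      = ∏ j, Complex.exp (((t * u j : ℝ) : ℂ) * (r j : ℂ) * Complex.I) := by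
    intro r
    rw [← Complex.exp_sum]
    congr 1
    push_cast
    rw [Finset.mul_sum, Finset.sum_mul]
    exact Finset.sum_congr rfl fun j _ => by ring
  simp_rw [this]
  rw [integral_fintype_prod_eq_prod
    (f := fun j (x : ℝ) => Complex.exp (((t * u j : ℝ) : ℂ) * (x : ℂ) * Complex.I))]
  simp_rw [← charFun_apply_real, charFun_gaussianReal]
  rw [← Complex.exp_sum]
  congr 1
  have hu' : ∑ j, (u j : ℂ) ^ 2 = 1 := by exact_mod_cast hu
  simp only [Complex.ofReal_zero, mul_zero, zero_mul, zero_sub, NNReal.coe_one, Complex.ofReal_one,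
    one_mul, Complex.ofReal_mul, mul_pow]
  rw [Finset.sum_neg_distrib, ← Finset.sum_div, ← Finset.mul_sum, hu', mul_one]

lemma jl_pdf (t x : ℝ) : gaussianPDFReal 0 1 x • Real.exp (t * x ^ 2)
    = (√(2 * Real.pi))⁻¹ * Real.exp (-(1 / 2 - t) * x ^ 2) := by
  rw [gaussianPDFReal, smul_eq_mul, mul_assoc, ← Real.exp_add]
  simp only [NNReal.coe_one, mul_one, sub_zero]
  congr 2
  ring

lemma jl_integrable (t : ℝ) (ht : t < 1 / 2) :
    Integrable (fun x : ℝ => Real.exp (t * x ^ 2)) (gaussianReal 0 1) := by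
  rw [gaussianReal_of_var_ne_zero _ one_ne_zero,
    integrable_withDensity_iff_integrable_smul' (measurable_gaussianPDF _ _)
      (ae_of_all _ fun _ => gaussianPDF_lt_top)]
  simp_rw [toReal_gaussianPDF, jl_pdf]
  exact (integrable_exp_neg_mul_sq (by linarith)).const_mul _

lemma jl_integral (t : ℝ) (ht : t < 1 / 2) :
    ∫ x : ℝ, Real.exp (t * x ^ 2) ∂(gaussianReal 0 1) = (√(1 - 2 * t))⁻¹ := by
  rw [integral_gaussianReal_eq_integral_smul one_ne_zero]
  simp_rw [jl_pdf]
  have h2 : 0 < 1 - 2 * t := by linarith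
  rw [integral_const_mul, integral_gaussian, ← Real.sqrt_inv, ← Real.sqrt_inv,
    ← Real.sqrt_mul (by positivity)]
  congr 1
  have : 1 / 2 - t ≠ 0 := by linarith
  have := h2.ne'
  have := Real.pi_pos.ne'
  field_simp

/-- The sum of squares of the coordinates of `R u`. -/
noncomputable def jlS (d p : ℕ) (u : Fin d → ℝ) (R : Fin p → Fin d → ℝ) : ℝ :=
  ∑ i, (∑ j, R i j * u j) ^ 2

lemma jl_mgf (d p : ℕ) (u : Fin d → ℝ) (hu : ∑ j, u j ^ 2 = 1) (t : ℝ) (ht : t < 1 / 2) :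
    Integrable (fun R => Real.exp (t * jlS d p u R))
      (Measure.pi fun _ : Fin p => Measure.pi fun _ : Fin d => gaussianReal 0 1) ∧
    mgf (jlS d p u) (Measure.pi fun _ : Fin p => Measure.pi fun _ : Fin d => gaussianReal 0 1) t
      = ((√(1 - 2 * t))⁻¹) ^ p := by
  have hm : Measurable (fun r : Fin d → ℝ => ∑ j, r j * u j) := by fun_prop
  have h : ∀ R : Fin p → Fin d → ℝ, Real.exp (t * jlS d p u R)
      = ∏ i, Real.exp (t * (∑ j, R i j * u j) ^ 2) := by
    intro R
    rw [← Real.exp_sum, jlS, Finset.mul_sum]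
  have hi : Integrable (fun x : ℝ => Real.exp (t * x ^ 2))
      ((Measure.pi fun _ : Fin d => gaussianReal 0 1).map (fun r => ∑ j, r j * u j)) := by
    rw [jl_row_law d u hu]; exact jl_integrable t ht
  constructor
  · simp_rw [h]
    exact Integrable.fintype_prod
      (f := fun (_ : Fin p) (r : Fin d → ℝ) => Real.exp (t * (∑ j, r j * u j) ^ 2))
      (fun _ => hi.comp_measurable hm)
  · rw [mgf]
    simp_rw [h]
    rw [integral_fintype_prod_eq_pow
      (f := fun (r : Fin d → ℝ) => Real.exp (t * (∑ j, r j * u j) ^ 2)), Fintype.card_fin]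
    congr 1
    have h3 := integral_map (μ := Measure.pi fun _ : Fin d => gaussianReal 0 1) hm.aemeasurable
      hi.aestronglyMeasurable
    rw [← h3, jl_row_law d u hu, jl_integral t ht]

lemma jl_bound (p : ℕ) (δ : ℝ) (hδ : -1 < δ) :
    δ / (2 * (1 + δ)) < 1 / 2 ∧
    Real.exp (-(δ / (2 * (1 + δ))) * ((1 + δ) * p)) * ((√(1 - 2 * (δ / (2 * (1 + δ)))))⁻¹) ^ p
      = Real.exp (p / 2 * (Real.log (1 + δ) - δ)) := by
  have h1 : 0 < 1 + δ := by linarith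
  constructor
  · rw [div_lt_div_iff₀ (by positivity) (by norm_num)]; linarith
  · have e1 : 1 - 2 * (δ / (2 * (1 + δ))) = (1 + δ)⁻¹ := by field_simp; ring
    have e2 : √(1 + δ) = Real.exp (Real.log (1 + δ) / 2) := by
      rw [← Real.log_sqrt h1.le, Real.exp_log (Real.sqrt_pos.2 h1)]
    rw [e1, Real.sqrt_inv, inv_inv, e2, ← Real.exp_nat_mul, ← Real.exp_add]
    congr 1
    field_simp
    ring

lemma jl_tail_upper (d p : ℕ) (u : Fin d → ℝ) (hu : ∑ j, u j ^ 2 = 1) (ε : ℝ) (h0 : 0 < ε) :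
    (Measure.pi fun _ : Fin p => Measure.pi fun _ : Fin d => gaussianReal 0 1).real
      {R | (1 + ε) * p ≤ jlS d p u R} ≤ Real.exp (-(p * (ε ^ 2 / 4 - ε ^ 3 / 6))) := by
  obtain ⟨ht, hb⟩ := jl_bound p ε (by linarith)
  obtain ⟨hi, hm⟩ := jl_mgf d p u hu _ ht
  refine (measure_ge_le_exp_mul_mgf _ (by positivity) hi).trans ?_
  rw [hm, hb, Real.exp_le_exp]
  have := mul_le_mul_of_nonneg_left (jl_log_upper ε h0.le) (Nat.cast_nonneg (α := ℝ) p)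
  linarith

lemma jl_tail_lower (d p : ℕ) (u : Fin d → ℝ) (hu : ∑ j, u j ^ 2 = 1) (ε : ℝ) (h0 : 0 < ε)
    (h1 : ε < 1) :
    (Measure.pi fun _ : Fin p => Measure.pi fun _ : Fin d => gaussianReal 0 1).real
      {R | jlS d p u R ≤ (1 - ε) * p} ≤ Real.exp (-(p * (ε ^ 2 / 4 - ε ^ 3 / 6))) := by
  obtain ⟨ht, hb⟩ := jl_bound p (-ε) (by linarith)
  obtain ⟨hi, hm⟩ := jl_mgf d p u hu _ ht
  have hneg : -ε / (2 * (1 + -ε)) ≤ 0 :=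
    div_nonpos_of_nonpos_of_nonneg (by linarith) (by linarith)
  rw [sub_eq_add_neg 1 ε]
  refine (measure_le_le_exp_mul_mgf _ hneg hi).trans ?_
  rw [hm, hb, Real.exp_le_exp, ← sub_eq_add_neg]
  have := mul_le_mul_of_nonneg_left (jl_log_lower ε h0.le h1) (Nat.cast_nonneg (α := ℝ) p)
  have : 0 ≤ (p : ℝ) * ε ^ 3 := by positivity
  linarith

lemma jl_pair (d p : ℕ) (hp0 : 0 < p) (w : EuclideanSpace ℝ (Fin d)) (ε : ℝ) (h0 : 0 < ε)
    (h1 : ε < 1) :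
    (Measure.pi fun _ : Fin p => Measure.pi fun _ : Fin d => gaussianReal 0 1).real
      {R | (1 + ε) * ‖w‖ ^ 2 < 1 / p * jlS d p w R} ≤ Real.exp (-(p * (ε ^ 2 / 4 - ε ^ 3 / 6))) ∧
    (Measure.pi fun _ : Fin p => Measure.pi fun _ : Fin d => gaussianReal 0 1).real
      {R | 1 / p * jlS d p w R < (1 - ε) * ‖w‖ ^ 2} ≤
        Real.exp (-(p * (ε ^ 2 / 4 - ε ^ 3 / 6))) := by
  rcases eq_or_ne w 0 with rfl | hw
  · simp [jlS, Real.exp_nonneg]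
  have hw' : 0 < ‖w‖ := norm_pos_iff.2 hw
  have hp : (0 : ℝ) < p := by exact_mod_cast hp0
  have hu : ∑ j, (w j / ‖w‖) ^ 2 = 1 := by
    simp_rw [div_pow]
    rw [← Finset.sum_div, ← EuclideanSpace.real_norm_sq_eq]
    field_simp
  have hS : ∀ R, 1 / (p : ℝ) * jlS d p w R = ‖w‖ ^ 2 * (jlS d p (fun j => w j / ‖w‖) R / p) := by
    intro R
    have : jlS d p (fun j => w j / ‖w‖) R = jlS d p w R / ‖w‖ ^ 2 := by
      simp_rw [jlS, ← mul_div_assoc, ← Finset.sum_div, div_pow]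
      rw [← Finset.sum_div]
    rw [this]
    field_simp
  simp_rw [hS]
  constructor
  · refine le_trans (measureReal_mono ?_) (jl_tail_upper d p _ hu ε h0)
    intro R hR
    simp only [Set.mem_ofPred_eq] at hR ⊢
    rw [mul_comm, mul_lt_mul_iff_right₀ (by positivity), lt_div_iff₀ hp] at hR
    exact hR.le
  · refine le_trans (measureReal_mono ?_) (jl_tail_lower d p _ hu ε h0 h1)
    intro R hR
    simp only [Set.mem_ofPred_eq] at hR ⊢
    rw [mul_comm (1 - ε), mul_lt_mul_iff_right₀ (by positivity), div_lt_iff₀ hp] at hR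
    exact hR.le

lemma jl_norm (d p : ℕ) (a b : EuclideanSpace ℝ (Fin d)) (R : Fin p → Fin d → ℝ) :
    ‖(WithLp.equiv 2 (Fin p → ℝ)).symm
                ((1 / Real.sqrt p) •
                  ((Matrix.of R) *ᵥ (WithLp.equiv 2 (Fin d → ℝ)) a)) -
              (WithLp.equiv 2 (Fin p → ℝ)).symm
                ((1 / Real.sqrt p) •
                  ((Matrix.of R) *ᵥ (WithLp.equiv 2 (Fin d → ℝ)) b))‖ ^ 2
      = 1 / p * jlS d p (a - b : EuclideanSpace ℝ (Fin d)) R := by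
  rw [EuclideanSpace.real_norm_sq_eq, jlS, Finset.mul_sum]
  refine Finset.sum_congr rfl fun i _ => ?_
  have : ∑ j, R i j * (a - b : EuclideanSpace ℝ (Fin d)) j
      = ∑ j, R i j * a j - ∑ j, R i j * b j := by
    rw [← Finset.sum_sub_distrib]
    exact Finset.sum_congr rfl fun j _ => by simp [mul_sub]
  rw [this]
  simp only [WithLp.equiv_symm_apply, PiLp.sub_apply, Pi.smul_apply, smul_eq_mul, Matrix.mulVec,
    dotProduct, Matrix.of_apply, WithLp.equiv_apply]
  rw [← mul_sub, mul_pow, div_pow, Real.sq_sqrt (Nat.cast_nonneg _), one_pow]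


/-- Random-projection Johnson–Lindenstrauss: if `N ≥ 2`, `0 < ε < 1`,
`p ≥ 24 ln N / (3ε² - 2ε³)`, and `ν` is the measure on `p×d` matrices with
iid standard Gaussian entries, then with probability at least `1/N` the map
`f_R(y) = (1/√p) (R y)` preserves all squared pairwise distances among the
`N` given points up to a factor `1 ± ε`. -/
theorem stmt14 (d p N : ℕ) (hd : 0 < d) (hp0 : 0 < p) (hN : 2 ≤ N)
    (y : Fin N → EuclideanSpace ℝ (Fin d))
    (ε : ℝ) (hε0 : 0 < ε) (hε1 : ε < 1)
    (hp : (p : ℝ) ≥ 24 * Real.log N / (3 * ε ^ 2 - 2 * ε ^ 3)) :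
    (Measure.pi fun _ : Fin p => Measure.pi fun _ : Fin d => gaussianReal 0 1)
        {R : Fin p → Fin d → ℝ | ∀ i j : Fin N,
          (1 - ε) * ‖y i - y j‖ ^ 2 ≤
            ‖(WithLp.equiv 2 (Fin p → ℝ)).symm
                ((1 / Real.sqrt p) •
                  ((Matrix.of R) *ᵥ (WithLp.equiv 2 (Fin d → ℝ)) (y i))) -
              (WithLp.equiv 2 (Fin p → ℝ)).symm
                ((1 / Real.sqrt p) •
                  ((Matrix.of R) *ᵥ (WithLp.equiv 2 (Fin d → ℝ)) (y j)))‖ ^ 2 ∧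
          ‖(WithLp.equiv 2 (Fin p → ℝ)).symm
                ((1 / Real.sqrt p) •
                  ((Matrix.of R) *ᵥ (WithLp.equiv 2 (Fin d → ℝ)) (y i))) -
              (WithLp.equiv 2 (Fin p → ℝ)).symm
                ((1 / Real.sqrt p) •
                  ((Matrix.of R) *ᵥ (WithLp.equiv 2 (Fin d → ℝ)) (y j)))‖ ^ 2 ≤
            (1 + ε) * ‖y i - y j‖ ^ 2}
      ≥ ENNReal.ofReal (1 / (N : ℝ)) := by
  simp_rw [jl_norm]
  set ν := (Measure.pi fun _ : Fin p => Measure.pi fun _ : Fin d => gaussianReal 0 1) with hν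
  set G := {R : Fin p → Fin d → ℝ | ∀ i j : Fin N,
      (1 - ε) * ‖y i - y j‖ ^ 2 ≤ 1 / p * jlS d p (y i - y j : EuclideanSpace ℝ (Fin d)) R ∧
      1 / p * jlS d p (y i - y j : EuclideanSpace ℝ (Fin d)) R ≤ (1 + ε) * ‖y i - y j‖ ^ 2} with hG
  have hN0 : (0 : ℝ) < N := by exact_mod_cast (by omega : 0 < N)
  have hden : 0 < 3 * ε ^ 2 - 2 * ε ^ 3 := by
    have : 3 * ε ^ 2 - 2 * ε ^ 3 = ε ^ 2 * (3 - 2 * ε) := by ring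
    rw [this]
    exact mul_pos (by positivity) (by linarith)
  have hexp : Real.exp (-(p * (ε ^ 2 / 4 - ε ^ 3 / 6))) ≤ 1 / (N : ℝ) ^ 2 := by
    have h2 : 1 / (N : ℝ) ^ 2 = Real.exp (-(2 * Real.log N)) := by
      rw [Real.exp_neg, one_div, mul_comm, Real.exp_mul, Real.exp_log hN0, Real.rpow_ofNat]
    rw [h2, Real.exp_le_exp]
    rw [ge_iff_le, div_le_iff₀ hden] at hp
    linarith
  let B : Fin N × Fin N → Set (Fin p → Fin d → ℝ) := fun q =>
    if q.1 < q.2 then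
      {R | (1 + ε) * ‖y q.1 - y q.2‖ ^ 2
        < 1 / p * jlS d p (y q.1 - y q.2 : EuclideanSpace ℝ (Fin d)) R}
    else
      {R | 1 / p * jlS d p (y q.1 - y q.2 : EuclideanSpace ℝ (Fin d)) R
        < (1 - ε) * ‖y q.1 - y q.2‖ ^ 2}
  have hB : ∀ q, ν.real (B q) ≤ 1 / (N : ℝ) ^ 2 := by
    intro q
    have := jl_pair d p hp0 (y q.1 - y q.2) ε hε0 hε1
    by_cases h : q.1 < q.2
    · simp only [B, if_pos h]; exact this.1.trans hexp
    · simp only [B, if_neg h]; exact this.2.trans hexp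
  have hsym : ∀ i j R, jlS d p (y i - y j : EuclideanSpace ℝ (Fin d)) R
      = jlS d p (y j - y i : EuclideanSpace ℝ (Fin d)) R := by
    intro i j R
    rw [← neg_sub (y j) (y i)]
    simp [jlS, -neg_sub]
  have hcov : Gᶜ ⊆ ⋃ q ∈ (Finset.univ : Finset (Fin N)).offDiag, B q := by
    intro R hR
    simp only [hG, Set.mem_compl_iff, Set.mem_ofPred_eq, not_forall, not_and_or, not_le] at hR
    obtain ⟨i, j, hR⟩ := hR
    have hij : i ≠ j := by
      rintro rfl
      simp [jlS] at hR
    simp only [Set.mem_iUnion, Finset.mem_offDiag, Finset.mem_univ, true_and, exists_prop]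
    rcases lt_or_gt_of_ne hij with h | h
    · rcases hR with hR | hR
      · refine ⟨(j, i), hij.symm, ?_⟩
        simp only [B, if_neg h.not_gt, Set.mem_ofPred_eq]
        rwa [hsym j i, norm_sub_rev (y j)]
      · refine ⟨(i, j), hij, ?_⟩
        simp only [B, if_pos h, Set.mem_ofPred_eq]
        exact hR
    · rcases hR with hR | hR
      · refine ⟨(i, j), hij, ?_⟩
        simp only [B, if_neg h.not_gt, Set.mem_ofPred_eq]
        exact hR
      · refine ⟨(j, i), hij.symm, ?_⟩
        simp only [B, if_pos h, Set.mem_ofPred_eq]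
        rwa [hsym j i, norm_sub_rev (y j)]
  have hc : ν.real Gᶜ ≤ 1 - 1 / N := by
    calc ν.real Gᶜ ≤ ν.real (⋃ q ∈ (Finset.univ : Finset (Fin N)).offDiag, B q) :=
          measureReal_mono hcov (measure_ne_top _ _)
      _ ≤ ∑ q ∈ (Finset.univ : Finset (Fin N)).offDiag, ν.real (B q) :=
          measureReal_biUnion_finset_le _ _
      _ ≤ ∑ q ∈ (Finset.univ : Finset (Fin N)).offDiag, 1 / (N : ℝ) ^ 2 :=
          Finset.sum_le_sum fun q _ => hB q
      _ = 1 - 1 / N := by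
          rw [Finset.sum_const, Finset.offDiag_card, Finset.card_univ, Fintype.card_fin,
            nsmul_eq_mul, Nat.cast_sub (Nat.le_mul_self N)]
          push_cast
          field_simp
  have h1 : 1 ≤ ν.real G + ν.real Gᶜ := by
    have := measureReal_union_le (μ := ν) G Gᶜ
    rwa [Set.union_compl_self, probReal_univ] at this
  rw [ge_iff_le, ENNReal.ofReal_le_iff_le_toReal (measure_ne_top _ _)]
  change 1 / (N : ℝ) ≤ ν.real G
  linarith
end
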